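/- arXiv:0811.0359 — 2 statements merged into one kernel-verified Lean document; each statement's English description precedes it below -/
import Mathlib

section
/- For every ground disjunctive logic program P and X ∈ {E,A}, τ^∨_HP(P) ≡ˣ τ^∨_EB(P), i.e., τ^∨_HP(P) and τ^∨_EB(P) have exactly the same stableˣ expansions. -/
set_option autoImplicit false

/-! # First-order autoepistemic logic (FO-AEL): syntax -/

structure Sig : Type 1 where
  Func : Type
  Pred : Type
  arF : Func → ℕ
  arP : Pred → ℕ

inductive Term (S : Sig) : Type
  | var : ℕ → Term S
  | func : (f : S.Func) → (Fin (S.arF f) → Term S) → Term S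

inductive Formula (S : Sig) : Type
  | atom : (p : S.Pred) → (Fin (S.arP p) → Term S) → Formula S
  | eq : Term S → Term S → Formula S
  | not : Formula S → Formula S
  | and : Formula S → Formula S → Formula S
  | ex : ℕ → Formula S → Formula S
  | box : Formula S → Formula S

namespace Term

variable {S : Sig}

/-- A term is ground if it contains no variables; ground terms are the *names*. -/
def isGround : Term S → Prop
  | var _ => False
  | func _ ts => ∀ i, (ts i).isGround

def hasVar (x : ℕ) : Term S → Prop
  | var y => y = x
  | func _ ts => ∃ i, (ts i).hasVar x

/-- Application of a partial (name) substitution to a term. -/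
def subst (β : ℕ → Option (Term S)) : Term S → Term S
  | var x => (β x).getD (var x)
  | func f ts => func f (fun i => (ts i).subst β)

/-- The function symbols occurring in a term. -/
def funcs : Term S → Set S.Func
  | var _ => ∅
  | func f ts => insert f (⋃ i, (ts i).funcs)

/-- `t` is a name (ground term) over the set `F` of function symbols. -/
def isNameOf (F : Set S.Func) : Term S → Prop
  | var _ => False
  | func f ts => f ∈ F ∧ ∀ i, (ts i).isNameOf F

end Term

namespace Formula

variable {S : Sig}

/-- A formula is objective if it is 𝖫-free. -/
def isObjective : Formula S → Prop
  | atom _ _ => True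
  | eq _ _ => True
  | not φ => φ.isObjective
  | and φ ψ => φ.isObjective ∧ ψ.isObjective
  | ex _ φ => φ.isObjective
  | box _ => False

def isGround : Formula S → Prop
  | atom _ ts => ∀ i, (ts i).isGround
  | eq t₁ t₂ => t₁.isGround ∧ t₂.isGround
  | not φ => φ.isGround
  | and φ ψ => φ.isGround ∧ ψ.isGround
  | ex _ _ => False
  | box φ => φ.isGround

def isAtomic : Formula S → Prop
  | atom _ _ => True
  | eq _ _ => True
  | not _ => False
  | and _ _ => False
  | ex _ _ => False
  | box _ => False

/-- The modal operator 𝖫 occurs only applied to (objective) atomic formulas. -/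
def boxAtomic : Formula S → Prop
  | atom _ _ => True
  | eq _ _ => True
  | not φ => φ.boxAtomic
  | and φ ψ => φ.boxAtomic ∧ ψ.boxAtomic
  | ex _ φ => φ.boxAtomic
  | box φ => φ.isAtomic

/-- Propositional formulas: built from 0-ary predicates only. -/
def isPropositional : Formula S → Prop
  | atom p _ => S.arP p = 0
  | eq _ _ => False
  | not φ => φ.isPropositional
  | and φ ψ => φ.isPropositional ∧ ψ.isPropositional
  | ex _ _ => False
  | box _ => False

def freeIn (x : ℕ) : Formula S → Prop
  | atom _ ts => ∃ i, (ts i).hasVar x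
  | eq t₁ t₂ => t₁.hasVar x ∨ t₂.hasVar x
  | not φ => φ.freeIn x
  | and φ ψ => φ.freeIn x ∨ ψ.freeIn x
  | ex y φ => x ≠ y ∧ φ.freeIn x
  | box φ => φ.freeIn x

/-- A formula is closed (a sentence) if it has no free variables. -/
def closed (φ : Formula S) : Prop := ∀ x, ¬ φ.freeIn x

/-- Capture-avoiding application of a partial name substitution (values are ground). -/
def subst (β : ℕ → Option (Term S)) : Formula S → Formula S
  | atom p ts => atom p (fun i => (ts i).subst β)
  | eq t₁ t₂ => eq (t₁.subst β) (t₂.subst β)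
  | not φ => not (φ.subst β)
  | and φ ψ => and (φ.subst β) (ψ.subst β)
  | ex y φ => ex y (φ.subst (fun z => if z = y then none else β z))
  | box φ => box (φ.subst β)

def funcs : Formula S → Set S.Func
  | atom _ ts => ⋃ i, (ts i).funcs
  | eq t₁ t₂ => t₁.funcs ∪ t₂.funcs
  | not φ => φ.funcs
  | and φ ψ => φ.funcs ∪ ψ.funcs
  | ex _ φ => φ.funcs
  | box φ => φ.funcs

def preds : Formula S → Set S.Pred
  | atom p _ => {p}
  | eq _ _ => ∅
  | not φ => φ.preds
  | and φ ψ => φ.preds ∪ ψ.preds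
  | ex _ φ => φ.preds
  | box φ => φ.preds

/-- `φ ∨ ψ` as an abbreviation: `¬(¬φ ∧ ¬ψ)`. -/
def or (φ ψ : Formula S) : Formula S := not (and (not φ) (not ψ))

/-- `φ ⊃ ψ` as an abbreviation: `¬(φ ∧ ¬ψ)`. -/
def imp (φ ψ : Formula S) : Formula S := not (and φ (not ψ))

/-- `∀x.φ` as an abbreviation: `¬∃x.¬φ`. -/
def all (x : ℕ) (φ : Formula S) : Formula S := not (ex x (not φ))

end Formula

/-! ## Semantics -/

structure Interp (S : Sig) where
  U : Type
  nonempty : Nonempty U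
  interpF : (f : S.Func) → (Fin (S.arF f) → U) → U
  interpP : (p : S.Pred) → (Fin (S.arP p) → U) → Prop

noncomputable def Interp.dflt {S : Sig} (w : Interp S) : w.U := Classical.choice w.nonempty

def Term.eval {S : Sig} (w : Interp S) (B : ℕ → w.U) : Term S → w.U
  | Term.var x => B x
  | Term.func f ts => w.interpF f (fun i => (ts i).eval w B)

/-- Evaluation of a ground term (the assignment is irrelevant). -/
noncomputable def Term.evalG {S : Sig} (w : Interp S) (t : Term S) : w.U :=
  t.eval w (fun _ => w.dflt)

/-- An individual is named if some name (ground term) denotes it. -/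
def IsNamed {S : Sig} (w : Interp S) (k : w.U) : Prop :=
  ∃ t : Term S, t.isGround ∧ Term.evalG w t = k

/-- A name substitution `β` is associated with the variable assignment `B`:
its domain is exactly the set of variables whose `B`-value is named, and
it assigns to each such variable a name denoting its `B`-value. -/
def Assoc {S : Sig} (w : Interp S) (B : ℕ → w.U) (β : ℕ → Option (Term S)) : Prop :=
  ∀ x : ℕ,
    (IsNamed w (B x) → (β x).isSome) ∧
    (∀ t : Term S, β x = some t → t.isGround ∧ Term.evalG w t = B x)

/-- The two semantics: any-name (E) and all-name (A). -/
inductive Sem : Type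
  | any
  | all

/-- Satisfaction of a formula in an autoepistemic interpretation `⟨w,Γ⟩`
under a variable assignment, for the any-name (E) resp. all-name (A) semantics. -/
def Sat {S : Sig} (X : Sem) (w : Interp S) (Γ : Set (Formula S)) :
    Formula S → (ℕ → w.U) → Prop
  | Formula.atom p ts, B => w.interpP p (fun i => (ts i).eval w B)
  | Formula.eq t₁ t₂, B => t₁.eval w B = t₂.eval w B
  | Formula.not φ, B => ¬ Sat X w Γ φ B
  | Formula.and φ ψ, B => Sat X w Γ φ B ∧ Sat X w Γ ψ B
  | Formula.ex x φ, B => ∃ u : w.U, Sat X w Γ φ (Function.update B x u)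
  | Formula.box φ, B =>
      match X with
      | Sem.any => ∃ β, Assoc w B β ∧ (φ.subst β).closed ∧ φ.subst β ∈ Γ
      | Sem.all => ∀ β, Assoc w B β → (φ.subst β).closed ∧ φ.subst β ∈ Γ

def ModelsF {S : Sig} (X : Sem) (w : Interp S) (Γ : Set (Formula S)) (φ : Formula S) : Prop :=
  ∀ B : ℕ → w.U, Sat X w Γ φ B

def ModelsT {S : Sig} (X : Sem) (w : Interp S) (Γ Φ : Set (Formula S)) : Prop :=
  ∀ φ ∈ Φ, ModelsF X w Γ φ

/-- `Φ ⊨ˣ_Γ φ`. -/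
def Entails {S : Sig} (X : Sem) (Φ Γ : Set (Formula S)) (φ : Formula S) : Prop :=
  ∀ w : Interp S, ModelsT X w Γ Φ → ModelsF X w Γ φ

/-- The standard names assumption: all names are interpreted distinctly
and every individual is named. -/
def SNA {S : Sig} (w : Interp S) : Prop :=
  (∀ t₁ t₂ : Term S, t₁.isGround → t₂.isGround → Term.evalG w t₁ = Term.evalG w t₂ → t₁ = t₂) ∧
  (∀ k : w.U, IsNamed w k)

/-- Entailment restricted to interpretations satisfying the standard names assumption. -/
def EntailsSN {S : Sig} (X : Sem) (Φ Γ : Set (Formula S)) (φ : Formula S) : Prop :=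
  ∀ w : Interp S, SNA w → ModelsT X w Γ Φ → ModelsF X w Γ φ

/-- `T` is a stableˣ expansion of `Φ`. -/
def StableExp {S : Sig} (X : Sem) (Φ T : Set (Formula S)) : Prop :=
  T = {φ | Entails X Φ T φ}

def objOf {S : Sig} (T : Set (Formula S)) : Set (Formula S) :=
  {φ ∈ T | φ.isObjective}

def ogOf {S : Sig} (T : Set (Formula S)) : Set (Formula S) :=
  {φ ∈ T | φ.isObjective ∧ φ.isGround}

def ogaOf {S : Sig} (T : Set (Formula S)) : Set (Formula S) :=
  {φ ∈ T | φ.isObjective ∧ φ.isGround ∧ φ.isAtomic}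

def Consistent {S : Sig} (T : Set (Formula S)) : Prop := T ≠ Set.univ

/-- `Φ₁ ≡ˣ Φ₂`: same stableˣ expansions. -/
def ExpEquiv {S : Sig} (X : Sem) (Φ₁ Φ₂ : Set (Formula S)) : Prop :=
  ∀ T, StableExp X Φ₁ T ↔ StableExp X Φ₂ T

/-- `Φ₁ ≡ˣ_γ Φ₂` for a selector `sel` (e.g. `ogaOf`): the stableˣ expansions
correspond with respect to `sel`. -/
def ExpEquivSel {S : Sig} (X : Sem) (sel : Set (Formula S) → Set (Formula S))
    (Φ₁ Φ₂ : Set (Formula S)) : Prop :=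
  (∀ T, StableExp X Φ₁ T → ∃ T', StableExp X Φ₂ T' ∧ sel T = sel T') ∧
  (∀ T', StableExp X Φ₂ T' → ∃ T, StableExp X Φ₁ T ∧ sel T = sel T')

/-- Autoepistemicˣ consequences of `Φ`. -/
def Cn {S : Sig} (X : Sem) (Φ : Set (Formula S)) : Set (Formula S) :=
  {φ | ∀ T, StableExp X Φ T → φ ∈ T}

def CnO {S : Sig} (X : Sem) (Φ : Set (Formula S)) : Set (Formula S) :=
  {φ ∈ Cn X Φ | φ.isObjective}

def CnOg {S : Sig} (X : Sem) (Φ : Set (Formula S)) : Set (Formula S) :=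
  {φ ∈ Cn X Φ | φ.isObjective ∧ φ.isGround}

/-! ## Logic programs -/

structure PAtom (S : Sig) where
  p : S.Pred
  args : Fin (S.arP p) → Term S

namespace PAtom

variable {S : Sig}

def toFormula (a : PAtom S) : Formula S := Formula.atom a.p a.args

def isGround (a : PAtom S) : Prop := ∀ i, (a.args i).isGround

def hasVar (x : ℕ) (a : PAtom S) : Prop := ∃ i, (a.args i).hasVar x

def substA (σ : ℕ → Term S) (a : PAtom S) : PAtom S :=
  ⟨a.p, fun i => (a.args i).subst (fun x => some (σ x))⟩

def funcs (a : PAtom S) : Set S.Func := ⋃ i, (a.args i).funcs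

end PAtom

/-- A (disjunctive) rule `h₁ | … | h_l ← b₁,…,b_m, not c₁,…,not c_n`,
together with a list of the variables occurring in it. -/
structure Rule (S : Sig) where
  head : List (PAtom S)
  pos : List (PAtom S)
  neg : List (PAtom S)
  vars : List ℕ

namespace Rule

variable {S : Sig}

def atoms (r : Rule S) : List (PAtom S) := r.head ++ r.pos ++ r.neg

def hasVar (x : ℕ) (r : Rule S) : Prop := ∃ a ∈ r.atoms, PAtom.hasVar x a

/-- Well-formedness: at least one head atom, and `vars` lists all variables of the rule. -/
def wf (r : Rule S) : Prop := r.head ≠ [] ∧ ∀ x, r.hasVar x → x ∈ r.vars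

def isNormal (r : Rule S) : Prop := r.head.length = 1

def isGround (r : Rule S) : Prop := (∀ a ∈ r.atoms, a.isGround) ∧ r.vars = []

def isSafe (r : Rule S) : Prop := ∀ x, r.hasVar x → ∃ a ∈ r.pos, PAtom.hasVar x a

def isPositive (r : Rule S) : Prop := r.neg = []

def applySubst (σ : ℕ → Term S) (r : Rule S) : Rule S :=
  ⟨r.head.map (PAtom.substA σ), r.pos.map (PAtom.substA σ), r.neg.map (PAtom.substA σ), []⟩

end Rule

abbrev Program (S : Sig) := Set (Rule S)

def progWf {S : Sig} (P : Program S) : Prop := ∀ r ∈ P, r.wf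
def progNormal {S : Sig} (P : Program S) : Prop := ∀ r ∈ P, r.isNormal
def progGround {S : Sig} (P : Program S) : Prop := ∀ r ∈ P, r.isGround
def progSafe {S : Sig} (P : Program S) : Prop := ∀ r ∈ P, r.isSafe
def progPositive {S : Sig} (P : Program S) : Prop := ∀ r ∈ P, r.isPositive

/-- The function symbols occurring in `P` (part of the signature `Σ_P`). -/
def progFuncs {S : Sig} (P : Program S) : Set S.Func :=
  {f | ∃ r ∈ P, ∃ a ∈ r.atoms, f ∈ a.funcs}

/-- The predicate symbols occurring in `P` (part of the signature `Σ_P`). -/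
def progPreds {S : Sig} (P : Program S) : Set S.Pred :=
  {q | ∃ r ∈ P, ∃ a ∈ r.atoms, a.p = q}

/-- The ambient signature is exactly the signature `Σ_P` of `P`. -/
def fullSig {S : Sig} (P : Program S) : Prop :=
  (∀ f : S.Func, f ∈ progFuncs P) ∧ (∀ q : S.Pred, q ∈ progPreds P)

/-- Standing assumption: `Σ_P` contains a 0-ary function symbol whenever it
has a predicate symbol of arity greater than 0. -/
def goodSig {S : Sig} (P : Program S) : Prop :=
  (∃ q ∈ progPreds P, 0 < S.arP q) → ∃ f ∈ progFuncs P, S.arF f = 0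

/-! ## Embeddings of logic programs into FO-AEL -/

def andAll {S : Sig} : Formula S → List (Formula S) → Formula S
  | φ, [] => φ
  | φ, ψ :: rest => andAll (Formula.and φ ψ) rest

def orAll {S : Sig} : Formula S → List (Formula S) → Formula S
  | φ, [] => φ
  | φ, ψ :: rest => orAll (Formula.or φ ψ) rest

/-- `impOf ants c` is `⋀ ants ⊃ c` (just `c` if there are no antecedents). -/
def impOf {S : Sig} : List (Formula S) → Formula S → Formula S
  | [], c => c
  | a :: rest, c => Formula.imp (andAll a rest) c

/-- Disjunction of a nonempty list (junk value on the empty list,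
which is excluded by rule well-formedness). -/
def disjOf {S : Sig} : List (Formula S) → Formula S
  | [] => Formula.eq (Term.var 0) (Term.var 0)
  | h :: rest => orAll h rest

/-- Universal uclosure over the listed variables. -/
def uclosure {S : Sig} (vs : List ℕ) (φ : Formula S) : Formula S :=
  vs.foldr Formula.all φ

def bodyHP {S : Sig} (r : Rule S) : List (Formula S) :=
  r.pos.map PAtom.toFormula ++ r.neg.map (fun c => Formula.not (Formula.box c.toFormula))

def bodyE {S : Sig} (r : Rule S) : List (Formula S) :=
  r.pos.map (fun b => Formula.and b.toFormula (Formula.box b.toFormula)) ++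
    r.neg.map (fun c => Formula.not (Formula.box c.toFormula))

/-- `τ_HP(r)` resp. `τ^∨_HP(r)`. -/
def embHP {S : Sig} (r : Rule S) : Formula S :=
  uclosure r.vars (impOf (bodyHP r) (disjOf (r.head.map PAtom.toFormula)))

/-- `τ_EB(r)` resp. `τ^∨_EB(r)`. -/
def embEB {S : Sig} (r : Rule S) : Formula S :=
  uclosure r.vars (impOf (bodyE r) (disjOf (r.head.map PAtom.toFormula)))

/-- `τ_EH(r)` resp. `τ^∨_EH(r)`. -/
def embEH {S : Sig} (r : Rule S) : Formula S :=
  uclosure r.vars (impOf (bodyE r)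
    (disjOf (r.head.map (fun h => Formula.and h.toFormula (Formula.box h.toFormula)))))

/-- The unique-names axioms `¬𝖫(t₁=t₂) ⊃ t₁≠t₂` for distinct names of `Σ_P`. -/
def UNAax {S : Sig} (P : Program S) : Set (Formula S) :=
  {φ | ∃ t₁ t₂ : Term S, t₁.isNameOf (progFuncs P) ∧ t₂.isNameOf (progFuncs P) ∧ t₁ ≠ t₂ ∧
        φ = Formula.imp (Formula.not (Formula.box (Formula.eq t₁ t₂)))
              (Formula.not (Formula.eq t₁ t₂))}

/-- The positive introspection axioms `α ⊃ 𝖫α` for objective ground atoms of `Σ_P`. -/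
def PIAax {S : Sig} (P : Program S) : Set (Formula S) :=
  {φ | ∃ a : PAtom S, a.p ∈ progPreds P ∧ (∀ i, (a.args i).isNameOf (progFuncs P)) ∧
        φ = Formula.imp a.toFormula (Formula.box a.toFormula)}

def ruleEmb {S : Sig} (emb : Rule S → Formula S) (P : Program S) : Set (Formula S) :=
  {φ | ∃ r ∈ P, φ = emb r}

def tauHP {S : Sig} (P : Program S) : Set (Formula S) := ruleEmb embHP P ∪ UNAax P
def tauEB {S : Sig} (P : Program S) : Set (Formula S) := ruleEmb embEB P ∪ UNAax P
def tauEH {S : Sig} (P : Program S) : Set (Formula S) := ruleEmb embEH P ∪ UNAax P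
def tauHPv {S : Sig} (P : Program S) : Set (Formula S) := ruleEmb embHP P ∪ PIAax P ∪ UNAax P
def tauEBv {S : Sig} (P : Program S) : Set (Formula S) := ruleEmb embEB P ∪ PIAax P ∪ UNAax P
def tauEHv {S : Sig} (P : Program S) : Set (Formula S) := ruleEmb embEH P ∪ UNAax P
def tauHPminus {S : Sig} (P : Program S) : Set (Formula S) := ruleEmb embHP P
def tauEHvminus {S : Sig} (P : Program S) : Set (Formula S) := ruleEmb embEH P

/-! ## Grounding and stable models -/

/-- The grounding of `P`: all ground instantiations of rules of `P`
obtained by replacing variables with names of `Σ_P`. -/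
def grP {S : Sig} (P : Program S) : Program S :=
  {r' | ∃ r ∈ P, ∃ σ : ℕ → Term S,
        (∀ x, r.hasVar x → (σ x).isNameOf (progFuncs P)) ∧ r' = Rule.applySubst σ r}

/-- A Herbrand interpretation: a set of ground atomic formulas. -/
def HerbrandI {S : Sig} (M : Set (Formula S)) : Prop :=
  ∀ φ ∈ M, φ.isAtomic ∧ φ.isGround

/-- `M` is a Herbrand model of the positive ground program `Q` (relative to the
names of `Σ_P`): rules are satisfied and `t = t ∈ M` for every name `t`. -/
def HerbrandModelOf {S : Sig} (P Q : Program S) (M : Set (Formula S)) : Prop :=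
  HerbrandI M ∧
  (∀ r ∈ Q, (∀ b ∈ r.pos, PAtom.toFormula b ∈ M) → ∃ h ∈ r.head, PAtom.toFormula h ∈ M) ∧
  (∀ t : Term S, t.isNameOf (progFuncs P) → Formula.eq t t ∈ M)

/-- The Gelfond–Lifschitz reduct of `gr(P)` with respect to `M`. -/
def reduct {S : Sig} (P : Program S) (M : Set (Formula S)) : Program S :=
  {r' | ∃ r ∈ grP P, (∀ c ∈ r.neg, PAtom.toFormula c ∉ M) ∧
        r' = ⟨r.head, r.pos, [], r.vars⟩}

/-- `M` is a stable model of `P`: a minimal Herbrand model of the reduct of `gr(P)` w.r.t. `M`. -/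
def isStableModel {S : Sig} (P : Program S) (M : Set (Formula S)) : Prop :=
  HerbrandModelOf P (reduct P M) M ∧
  ∀ M', M' ⊆ M → HerbrandModelOf P (reduct P M) M' → M' = M

/-! ## First-order theories and classes thereof -/

/-- An FO theory: a set of objective sentences. -/
def FOTheory {S : Sig} (Φ : Set (Formula S)) : Prop :=
  ∀ φ ∈ Φ, φ.isObjective ∧ φ.closed

def theoryFuncs {S : Sig} (Φ : Set (Formula S)) : Set S.Func := {f | ∃ φ ∈ Φ, f ∈ φ.funcs}
def theoryPreds {S : Sig} (Φ : Set (Formula S)) : Set S.Pred := {q | ∃ φ ∈ Φ, q ∈ φ.preds}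

/-- The ambient signature is exactly the union of the signatures of `Φ` and `P`. -/
def CoverSig {S : Sig} (Φ : Set (Formula S)) (P : Program S) : Prop :=
  (∀ f : S.Func, f ∈ theoryFuncs Φ ∪ progFuncs P) ∧
  (∀ q : S.Pred, q ∈ theoryPreds Φ ∪ progPreds P)

def exClosure {S : Sig} (ys : List ℕ) (φ : Formula S) : Formula S := ys.foldr Formula.ex φ

/-- A Horn sentence `(∀)(b₁ ∧ … ∧ b_n ⊃ h)` with atomic `b_i`, `h`
(the consequent `h` may be absent). -/
def isHornSentence {S : Sig} (φ : Formula S) : Prop :=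
  ∃ (vs : List ℕ) (bs : List (Formula S)),
    (∀ b ∈ bs, b.isAtomic) ∧
    ((∃ h : Formula S, h.isAtomic ∧ φ = uclosure vs (impOf bs h)) ∨
     (∃ b rest, bs = b :: rest ∧ φ = uclosure vs (Formula.not (andAll b rest))))

def HornTheory {S : Sig} (Φ : Set (Formula S)) : Prop :=
  FOTheory Φ ∧ ∀ φ ∈ Φ, isHornSentence φ

/-- A generalized Horn sentence `(∀)(b₁ ∧ … ∧ b_n ⊃ ∃ȳ.h)` with atomic `b_i`, `h`,
the variables `ȳ` occurring only in `h` (the consequent may be absent). -/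
def isGHornSentence {S : Sig} (φ : Formula S) : Prop :=
  ∃ (vs : List ℕ) (bs : List (Formula S)),
    (∀ b ∈ bs, b.isAtomic) ∧
    ((∃ (ys : List ℕ) (h : Formula S), h.isAtomic ∧
        (∀ y ∈ ys, ∀ b ∈ bs, ¬ b.freeIn y) ∧
        φ = uclosure vs (impOf bs (exClosure ys h))) ∨
     (∃ b rest, bs = b :: rest ∧ φ = uclosure vs (Formula.not (andAll b rest))))

def GHornTheory {S : Sig} (Φ : Set (Formula S)) : Prop :=
  FOTheory Φ ∧ ∀ φ ∈ Φ, isGHornSentence φ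

def PropTheory {S : Sig} (Φ : Set (Formula S)) : Prop :=
  FOTheory Φ ∧ ∀ φ ∈ Φ, φ.isPropositional

/-! The two embeddings differ only in that each positive body atom `b` becomes `b ∧ 𝖫b`. When `b` is
ground, `b ⊃ 𝖫b` is one of the positive introspection axioms, so `b` and `b ∧ 𝖫b` are equivalent in
every autoepistemic interpretation satisfying these axioms. Hence both theories are satisfied by
the same interpretations relative to every belief set, which makes their stable expansions
coincide. -/

theorem Term.isNameOf_iff {S : Sig} {F : Set S.Func} {t : Term S} :
    t.isNameOf F ↔ t.isGround ∧ t.funcs ⊆ F := by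
  induction t with
  | var x => simp only [isNameOf, isGround, false_and]
  | func f ts ih =>
    simp only [isNameOf, isGround, funcs, ih, forall_and, Set.insert_subset_iff,
      Set.iUnion_subset_iff]
    exact and_left_comm

theorem Rule.mem_atoms_of_mem_pos {S : Sig} {r : Rule S} {b : PAtom S} (hb : b ∈ r.pos) :
    b ∈ r.atoms :=
  List.mem_append_left _ (List.mem_append_right _ hb)

section Satisfaction

variable {S : Sig} {X : Sem} {w : Interp S} {Γ : Set (Formula S)}

theorem sat_and {φ ψ : Formula S} {B : ℕ → w.U} :
    Sat X w Γ (φ.and ψ) B ↔ Sat X w Γ φ B ∧ Sat X w Γ ψ B :=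
  Iff.rfl

theorem sat_imp {φ ψ : Formula S} {B : ℕ → w.U} :
    Sat X w Γ (φ.imp ψ) B ↔ (Sat X w Γ φ B → Sat X w Γ ψ B) := by
  simp only [Formula.imp, Sat, not_and_not_right]

theorem sat_all {x : ℕ} {φ : Formula S} {B : ℕ → w.U} :
    Sat X w Γ (φ.all x) B ↔ ∀ u, Sat X w Γ φ (Function.update B x u) := by
  simp only [Formula.all, Sat, not_exists, not_not]

theorem sat_andAll {φ : Formula S} {l : List (Formula S)} {B : ℕ → w.U} :
    Sat X w Γ (andAll φ l) B ↔ ∀ ψ ∈ φ :: l, Sat X w Γ ψ B := by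
  induction l generalizing φ with
  | nil => simp only [andAll, List.forall_mem_singleton]
  | cons χ l ih => simp only [andAll, ih, List.forall_mem_cons, sat_and, and_assoc]

theorem sat_impOf {l : List (Formula S)} {φ : Formula S} {B : ℕ → w.U} :
    Sat X w Γ (impOf l φ) B ↔ ((∀ ψ ∈ l, Sat X w Γ ψ B) → Sat X w Γ φ B) := by
  cases l with
  | nil => simp [impOf]
  | cons χ l => rw [impOf, sat_imp, sat_andAll]

theorem modelsF_all {x : ℕ} {φ : Formula S} :
    ModelsF X w Γ (φ.all x) ↔ ModelsF X w Γ φ := by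
  simp only [ModelsF, sat_all]
  exact ⟨fun h B => Function.update_eq_self x B ▸ h B (B x), fun h _ _ => h _⟩

theorem modelsF_uclosure {vs : List ℕ} {φ : Formula S} :
    ModelsF X w Γ (uclosure vs φ) ↔ ModelsF X w Γ φ := by
  induction vs with
  | nil => rfl
  | cons x vs ih => exact modelsF_all.trans ih

theorem modelsT_union {Φ Ψ : Set (Formula S)} :
    ModelsT X w Γ (Φ ∪ Ψ) ↔ ModelsT X w Γ Φ ∧ ModelsT X w Γ Ψ :=
  forall₂_or_left

theorem modelsT_ruleEmb {emb : Rule S → Formula S} {P : Program S} :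
    ModelsT X w Γ (ruleEmb emb P) ↔ ∀ r ∈ P, ModelsF X w Γ (emb r) := by
  constructor
  · exact fun h r hr => h _ ⟨r, hr, rfl⟩
  · rintro h _ ⟨r, hr, rfl⟩
    exact h r hr

end Satisfaction

theorem expEquiv_of_forall_modelsT_iff {S : Sig} {X : Sem} {Φ Ψ : Set (Formula S)}
    (h : ∀ (w : Interp S) (Γ : Set (Formula S)), ModelsT X w Γ Φ ↔ ModelsT X w Γ Ψ) :
    ExpEquiv X Φ Ψ := by
  intro T
  simp only [StableExp, Entails, h]

section Embeddings

variable {S : Sig} {X : Sem} {w : Interp S} {Γ : Set (Formula S)} {P : Program S} {r : Rule S}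

theorem imp_box_mem_PIAax {a : PAtom S} (hr : r ∈ P) (ha : a ∈ r.atoms) (hground : a.isGround) :
    a.toFormula.imp a.toFormula.box ∈ PIAax P := by
  refine ⟨a, ⟨r, hr, a, ha, rfl⟩, fun i => Term.isNameOf_iff.2 ⟨hground i, fun f hf => ?_⟩, rfl⟩
  exact ⟨r, hr, a, ha, Set.mem_iUnion_of_mem i hf⟩

theorem forall_sat_bodyE_iff_bodyHP {B : ℕ → w.U}
    (hbox : ∀ b ∈ r.pos, Sat X w Γ b.toFormula B → Sat X w Γ b.toFormula.box B) :
    (∀ ψ ∈ bodyE r, Sat X w Γ ψ B) ↔ ∀ ψ ∈ bodyHP r, Sat X w Γ ψ B := by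
  simp only [bodyE, bodyHP, List.forall_mem_append, List.forall_mem_map, sat_and]
  exact and_congr_left fun _ => forall₂_congr fun b hb => and_iff_left_of_imp (hbox b hb)

theorem modelsF_embHP_iff_embEB
    (hbox : ∀ b ∈ r.pos, ModelsF X w Γ (b.toFormula.imp b.toFormula.box)) :
    ModelsF X w Γ (embHP r) ↔ ModelsF X w Γ (embEB r) := by
  rw [embHP, embEB, modelsF_uclosure, modelsF_uclosure]
  refine forall_congr' fun B => ?_
  rw [sat_impOf, sat_impOf, forall_sat_bodyE_iff_bodyHP fun b hb => sat_imp.1 (hbox b hb B)]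

theorem modelsT_tauHPv_iff_tauEBv (hpos : ∀ r ∈ P, ∀ b ∈ r.pos, b.isGround) :
    ModelsT X w Γ (tauHPv P) ↔ ModelsT X w Γ (tauEBv P) := by
  simp only [tauHPv, tauEBv, modelsT_union, modelsT_ruleEmb]
  refine and_congr_left fun _ => and_congr_left fun hPIA => forall₂_congr fun r hr => ?_
  exact modelsF_embHP_iff_embEB fun b hb =>
    hPIA _ (imp_box_mem_PIAax hr (Rule.mem_atoms_of_mem_pos hb) (hpos r hr b hb))

end Embeddings

theorem stmt8_general {S : Sig} (X : Sem) (P : Program S)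
    (hpos : ∀ r ∈ P, ∀ b ∈ r.pos, b.isGround) :
    ExpEquiv X (tauHPv P) (tauEBv P) :=
  expEquiv_of_forall_modelsT_iff fun _ _ => modelsT_tauHPv_iff_tauEBv hpos

/-- For every ground disjunctive program `P`, `τ^∨_HP(P)` and
`τ^∨_EB(P)` have exactly the same stableˣ expansions. -/
theorem stmt8 {S : Sig} (X : Sem) (P : Program S)
    (hwf : progWf P) (hground : progGround P) (hfull : fullSig P) (hgood : goodSig P) :
    ExpEquiv X (tauHPv P) (tauEBv P) :=
  stmt8_general X P fun r hr b hb => (hground r hr).1 b (Rule.mem_atoms_of_mem_pos hb)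
end

section
/- For every disjunctive logic program P, X ∈ {E,A}, and every autoepistemic interpretation ⟨w,T⟩: if w ⊨ˣ_T τ^∨_HP(P) then w ⊨ˣ_T τ^∨_EB(P); and if P is safe, then w ⊨ˣ_T τ^∨_EB(P) implies w ⊨ˣ_T τ^∨_EH(P). -/
set_option autoImplicit false

/-!
By safety, every variable of a head atom occurs in a positive body atom `b`, and satisfaction of
`𝖫b` at an assignment forces each variable of `b` to denote a named individual, as otherwise no
associated name substitution closes `b`. All variables of the head atom are therefore named, so
each associated name substitution turns it into a ground atom with the same truth value, to which
a positive introspection axiom applies; hence `h` implies `𝖫h` whenever the body of the `τ_EB`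
embedding holds.
-/

namespace Term

variable {S : Sig} {β : ℕ → Option (Term S)} {t : Term S} {x : ℕ}

theorem not_hasVar_of_isGround (ht : t.isGround) : ¬ t.hasVar x := by
  induction t with
  | var y => exact ht.elim
  | func f ts ih => exact fun ⟨i, hi⟩ => ih i (ht i) hi

theorem subst_eq_self_of_isGround (ht : t.isGround) : t.subst β = t := by
  induction t with
  | var y => exact ht.elim
  | func f ts ih => exact congrArg (func f) (funext fun i => ih i (ht i))

theorem isNameOf_of_isGround {F : Set S.Func} (ht : t.isGround) (hF : t.funcs ⊆ F) :
    t.isNameOf F := by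
  induction t with
  | var y => exact ht.elim
  | func f ts ih =>
    obtain ⟨hf, hts⟩ := Set.insert_subset_iff.mp hF
    exact ⟨hf, fun i => ih i (ht i) (Set.iUnion_subset_iff.mp hts i)⟩

theorem hasVar_subst_of_eq_none (hβ : β x = none) (ht : t.hasVar x) : (t.subst β).hasVar x := by
  induction t with
  | var y =>
    obtain rfl : y = x := ht
    simp only [subst, hβ, Option.getD_none, hasVar]
  | func f ts ih =>
    obtain ⟨i, hi⟩ := ht
    exact ⟨i, ih i hi⟩

theorem isGround_subst (hβ : ∀ x, t.hasVar x → ∃ s, β x = some s ∧ s.isGround) :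
    (t.subst β).isGround := by
  induction t with
  | var y =>
    obtain ⟨s, hs, hground⟩ := hβ y rfl
    simpa only [subst, hs, Option.getD_some] using hground
  | func f ts ih => exact fun i => ih i fun x hx => hβ x ⟨i, hx⟩

variable {w : Interp S} {B : ℕ → w.U}

theorem eval_eq_evalG_of_isGround (ht : t.isGround) : t.eval w B = t.evalG w := by
  induction t with
  | var y => exact ht.elim
  | func f ts ih => exact congrArg (w.interpF f) (funext fun i => ih i (ht i))

theorem eval_subst (hβ : ∀ x s, β x = some s → s.isGround ∧ s.evalG w = B x) :
    (t.subst β).eval w B = t.eval w B := by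
  induction t with
  | var y =>
    cases hy : β y with
    | none => simp only [subst, hy, Option.getD_none]
    | some s =>
      obtain ⟨hground, heval⟩ := hβ y s hy
      simpa only [subst, hy, Option.getD_some, eval, eval_eq_evalG_of_isGround hground] using heval
  | func f ts ih => exact congrArg (w.interpF f) (funext ih)

end Term

namespace Formula

variable {S : Sig} {φ : Formula S}

theorem closed_of_isGround (hφ : φ.isGround) : φ.closed := by
  intro x
  induction φ with
  | atom p ts => exact fun ⟨i, hi⟩ => Term.not_hasVar_of_isGround (hφ i) hi
  | eq s t =>
    exact not_or.mpr ⟨Term.not_hasVar_of_isGround hφ.1, Term.not_hasVar_of_isGround hφ.2⟩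
  | not φ ih => exact ih hφ
  | and φ ψ ihφ ihψ => exact not_or.mpr ⟨ihφ hφ.1, ihψ hφ.2⟩
  | ex y φ => exact hφ.elim
  | box φ ih => exact ih hφ

theorem subst_eq_self_of_isGround {β : ℕ → Option (Term S)} (hφ : φ.isGround) :
    φ.subst β = φ := by
  induction φ with
  | atom p ts => exact congrArg (atom p) (funext fun i => Term.subst_eq_self_of_isGround (hφ i))
  | eq s t =>
    exact congrArg₂ eq (Term.subst_eq_self_of_isGround hφ.1) (Term.subst_eq_self_of_isGround hφ.2)
  | not φ ih => exact congrArg not (ih hφ)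
  | and φ ψ ihφ ihψ => exact congrArg₂ and (ihφ hφ.1) (ihψ hφ.2)
  | ex y φ => exact hφ.elim
  | box φ ih => exact congrArg box (ih hφ)

theorem freeIn_subst_of_eq_none {β : ℕ → Option (Term S)} {x : ℕ} (hβ : β x = none)
    (hφ : φ.freeIn x) : (φ.subst β).freeIn x := by
  induction φ generalizing β with
  | atom p ts =>
    obtain ⟨i, hi⟩ := hφ
    exact ⟨i, Term.hasVar_subst_of_eq_none hβ hi⟩
  | eq s t =>
    exact hφ.imp (Term.hasVar_subst_of_eq_none hβ) (Term.hasVar_subst_of_eq_none hβ)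
  | not φ ih => exact ih hβ hφ
  | and φ ψ ihφ ihψ => exact hφ.imp (ihφ hβ) (ihψ hβ)
  | ex y φ ih => exact ⟨hφ.1, ih ((if_neg hφ.1).trans hβ) hφ.2⟩
  | box φ ih => exact ih hβ hφ

end Formula

theorem Assoc.exists_eq_some {S : Sig} {w : Interp S} {B : ℕ → w.U} {β : ℕ → Option (Term S)}
    (hβ : Assoc w B β) {x : ℕ} (hx : IsNamed w (B x)) : ∃ t, β x = some t ∧ t.isGround := by
  obtain ⟨t, ht⟩ := Option.isSome_iff_exists.mp ((hβ x).1 hx)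
  exact ⟨t, ht, ((hβ x).2 t ht).1⟩

theorem exists_assoc {S : Sig} (w : Interp S) (B : ℕ → w.U) : ∃ β, Assoc w B β := by
  classical
  refine ⟨fun x => if h : IsNamed w (B x) then some h.choose else none, fun x => ?_⟩
  by_cases h : IsNamed w (B x)
  · simpa [h] using h.choose_spec
  · simp [h]

section Satisfaction

variable {S : Sig} {X : Sem} {w : Interp S} {T : Set (Formula S)} {B : ℕ → w.U}

theorem sat_not_iff {φ : Formula S} : Sat X w T φ.not B ↔ ¬ Sat X w T φ B := Iff.rfl

theorem sat_and_iff {φ ψ : Formula S} :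
    Sat X w T (φ.and ψ) B ↔ Sat X w T φ B ∧ Sat X w T ψ B := Iff.rfl

theorem sat_or_iff {φ ψ : Formula S} :
    Sat X w T (φ.or ψ) B ↔ Sat X w T φ B ∨ Sat X w T ψ B := by
  simp only [Formula.or, sat_not_iff, sat_and_iff, not_and_or, not_not]

theorem sat_imp_iff {φ ψ : Formula S} :
    Sat X w T (φ.imp ψ) B ↔ (Sat X w T φ B → Sat X w T ψ B) := by
  simp only [Formula.imp, sat_not_iff, sat_and_iff, not_and, not_not]

theorem sat_all_iff {x : ℕ} {φ : Formula S} :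
    Sat X w T (φ.all x) B ↔ ∀ u, Sat X w T φ (Function.update B x u) := by
  simp only [Formula.all, Sat, not_exists, not_not]

theorem sat_andAll_iff {φ : Formula S} {l : List (Formula S)} :
    Sat X w T (andAll φ l) B ↔ ∀ ψ ∈ φ :: l, Sat X w T ψ B := by
  induction l generalizing φ with
  | nil => simp only [andAll, List.forall_mem_singleton]
  | cons χ l ih => simp only [andAll, ih, sat_and_iff, List.forall_mem_cons, and_assoc]

theorem sat_orAll_iff {φ : Formula S} {l : List (Formula S)} :
    Sat X w T (orAll φ l) B ↔ ∃ ψ ∈ φ :: l, Sat X w T ψ B := by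
  induction l generalizing φ with
  | nil => simp only [orAll, List.mem_singleton, exists_eq_left]
  | cons χ l ih => simp only [orAll, ih, sat_or_iff, List.exists_mem_cons_iff, or_assoc]

theorem sat_impOf_iff {l : List (Formula S)} {φ : Formula S} :
    Sat X w T (impOf l φ) B ↔ ((∀ ψ ∈ l, Sat X w T ψ B) → Sat X w T φ B) := by
  cases l with
  | nil => simp only [impOf, List.not_mem_nil, false_imp_iff, implies_true, true_imp_iff]
  | cons χ l => simp only [impOf, sat_imp_iff, sat_andAll_iff]

theorem sat_disjOf_iff {l : List (Formula S)} (hl : l ≠ []) :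
    Sat X w T (disjOf l) B ↔ ∃ ψ ∈ l, Sat X w T ψ B := by
  cases l with
  | nil => exact absurd rfl hl
  | cons φ l => exact sat_orAll_iff

theorem modelsF_uclosure_iff {vs : List ℕ} {φ : Formula S} :
    ModelsF X w T (uclosure vs φ) ↔ ModelsF X w T φ := by
  induction vs with
  | nil => rfl
  | cons x vs ih =>
    rw [← ih]
    constructor
    · intro h B
      have hB := sat_all_iff.mp (h B) (B x)
      rwa [Function.update_eq_self] at hB
    · exact fun h B => sat_all_iff.mpr fun u => h _

theorem modelsF_uclosure_impOf_disjOf_iff {vs : List ℕ} {l m : List (Formula S)} (hm : m ≠ []) :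
    ModelsF X w T (uclosure vs (impOf l (disjOf m))) ↔
      ∀ B, (∀ ψ ∈ l, Sat X w T ψ B) → ∃ ψ ∈ m, Sat X w T ψ B := by
  rw [modelsF_uclosure_iff]
  exact forall_congr' fun B => by rw [sat_impOf_iff, sat_disjOf_iff hm]

theorem modelsT_union_iff {Φ Ψ : Set (Formula S)} :
    ModelsT X w T (Φ ∪ Ψ) ↔ ModelsT X w T Φ ∧ ModelsT X w T Ψ :=
  forall₂_or_left

theorem exists_assoc_of_sat_box {φ : Formula S} (h : Sat X w T φ.box B) :
    ∃ β, Assoc w B β ∧ (φ.subst β).closed ∧ φ.subst β ∈ T := by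
  cases X with
  | any => exact h
  | all =>
    obtain ⟨β, hβ⟩ := exists_assoc w B
    exact ⟨β, hβ, h β hβ⟩

theorem sat_box_of_forall_assoc {φ : Formula S}
    (h : ∀ β, Assoc w B β → (φ.subst β).closed ∧ φ.subst β ∈ T) : Sat X w T φ.box B := by
  cases X with
  | any =>
    obtain ⟨β, hβ⟩ := exists_assoc w B
    exact ⟨β, hβ, h β hβ⟩
  | all => exact h

theorem mem_of_sat_box_of_isGround {φ : Formula S} (hφ : φ.isGround)
    (h : Sat X w T φ.box B) : φ ∈ T := by
  obtain ⟨β, -, -, hmem⟩ := exists_assoc_of_sat_box h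
  rwa [Formula.subst_eq_self_of_isGround hφ] at hmem

theorem isNamed_of_sat_box {φ : Formula S} (h : Sat X w T φ.box B) {x : ℕ}
    (hx : φ.freeIn x) : IsNamed w (B x) := by
  obtain ⟨β, hβ, hclosed, -⟩ := exists_assoc_of_sat_box h
  cases hβx : β x with
  | none => exact absurd (Formula.freeIn_subst_of_eq_none hβx hx) (hclosed x)
  | some t => exact ⟨t, (hβ x).2 t hβx⟩

theorem sat_subst_iff {φ : Formula S} (hφ : φ.isObjective) {β : ℕ → Option (Term S)}
    (hβ : ∀ x t, β x = some t → t.isGround ∧ t.evalG w = B x) :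
    Sat X w T (φ.subst β) B ↔ Sat X w T φ B := by
  induction φ generalizing β B with
  | atom p ts => simp only [Formula.subst, Sat, Term.eval_subst hβ]
  | eq s t => simp only [Formula.subst, Sat, Term.eval_subst hβ]
  | not φ ih => exact not_congr (ih hφ hβ)
  | and φ ψ ihφ ihψ => exact and_congr (ihφ hφ.1 hβ) (ihψ hφ.2 hβ)
  | ex y φ ih =>
    -- Dropping `y` from the domain of `β` preserves `hβ`, though it may destroy `Assoc`.
    refine exists_congr fun u => ih hφ fun x t hx => ?_
    obtain ⟨hne, hβx⟩ : x ≠ y ∧ β x = some t := by simpa using hx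
    simpa only [Function.update_of_ne hne] using hβ x t hβx
  | box φ => exact hφ.elim

theorem sat_box_of_modelsT_PIAax {P : Program S} (hPIA : ModelsT X w T (PIAax P))
    (hfuncs : ∀ f, f ∈ progFuncs P) {a : PAtom S} (hp : a.p ∈ progPreds P)
    (hnamed : ∀ x, a.hasVar x → IsNamed w (B x)) (ha : Sat X w T a.toFormula B) :
    Sat X w T a.toFormula.box B := by
  refine sat_box_of_forall_assoc fun β hβ => ?_
  have hground : (a.toFormula.subst β).isGround := fun i =>
    Term.isGround_subst fun x hx => hβ.exists_eq_some (hnamed x ⟨i, hx⟩)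
  have hnames (i) : ((a.args i).subst β).isNameOf (progFuncs P) :=
    Term.isNameOf_of_isGround (hground i) fun f _ => hfuncs f
  have hintro : Sat X w T ((a.toFormula.subst β).imp (a.toFormula.subst β).box) B :=
    hPIA _ ⟨⟨a.p, fun i => (a.args i).subst β⟩, hp, hnames, rfl⟩ B
  have hsubst : Sat X w T (a.toFormula.subst β) B :=
    (sat_subst_iff (φ := a.toFormula) trivial fun x => (hβ x).2).mpr ha
  have hbox := sat_imp_iff.mp hintro hsubst
  exact ⟨Formula.closed_of_isGround hground, mem_of_sat_box_of_isGround hground hbox⟩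

end Satisfaction

section Embeddings

variable {S : Sig} {X : Sem} {w : Interp S} {T : Set (Formula S)} {r : Rule S}

theorem modelsT_ruleEmb_iff {emb : Rule S → Formula S} {P : Program S} :
    ModelsT X w T (ruleEmb emb P) ↔ ∀ r ∈ P, ModelsF X w T (emb r) :=
  ⟨fun h r hr => h _ ⟨r, hr, rfl⟩, by rintro h _ ⟨r, hr, rfl⟩; exact h r hr⟩

theorem modelsF_embHP_iff (hr : r.head ≠ []) :
    ModelsF X w T (embHP r) ↔ ∀ B,
      (∀ b ∈ r.pos, Sat X w T b.toFormula B) →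
      (∀ c ∈ r.neg, ¬ Sat X w T c.toFormula.box B) →
      ∃ h ∈ r.head, Sat X w T h.toFormula B := by
  simp only [embHP, modelsF_uclosure_impOf_disjOf_iff (mt List.map_eq_nil_iff.mp hr), bodyHP,
    List.forall_mem_append, List.mem_map, forall_exists_index, and_imp, forall_apply_eq_imp_iff₂,
    exists_exists_and_eq_and, sat_not_iff]

theorem modelsF_embEB_iff (hr : r.head ≠ []) :
    ModelsF X w T (embEB r) ↔ ∀ B,
      (∀ b ∈ r.pos, Sat X w T b.toFormula B ∧ Sat X w T b.toFormula.box B) →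
      (∀ c ∈ r.neg, ¬ Sat X w T c.toFormula.box B) →
      ∃ h ∈ r.head, Sat X w T h.toFormula B := by
  simp only [embEB, modelsF_uclosure_impOf_disjOf_iff (mt List.map_eq_nil_iff.mp hr), bodyE,
    List.forall_mem_append, List.mem_map, forall_exists_index, and_imp, forall_apply_eq_imp_iff₂,
    exists_exists_and_eq_and, sat_not_iff, sat_and_iff]

theorem modelsF_embEH_iff (hr : r.head ≠ []) :
    ModelsF X w T (embEH r) ↔ ∀ B,
      (∀ b ∈ r.pos, Sat X w T b.toFormula B ∧ Sat X w T b.toFormula.box B) →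
      (∀ c ∈ r.neg, ¬ Sat X w T c.toFormula.box B) →
      ∃ h ∈ r.head, Sat X w T h.toFormula B ∧ Sat X w T h.toFormula.box B := by
  simp only [embEH, modelsF_uclosure_impOf_disjOf_iff (mt List.map_eq_nil_iff.mp hr), bodyE,
    List.forall_mem_append, List.mem_map, forall_exists_index, and_imp, forall_apply_eq_imp_iff₂,
    exists_exists_and_eq_and, sat_not_iff, sat_and_iff]

theorem modelsF_embEB_of_modelsF_embHP (hr : r.head ≠ []) (h : ModelsF X w T (embHP r)) :
    ModelsF X w T (embEB r) :=
  (modelsF_embEB_iff hr).mpr fun B hpos hneg =>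
    (modelsF_embHP_iff hr).mp h B (fun b hb => (hpos b hb).1) hneg

theorem modelsF_embEH_of_modelsF_embEB {P : Program S} (hPIA : ModelsT X w T (PIAax P))
    (hfuncs : ∀ f, f ∈ progFuncs P) (hrP : r ∈ P) (hr : r.head ≠ []) (hsafe : r.isSafe)
    (h : ModelsF X w T (embEB r)) : ModelsF X w T (embEH r) := by
  refine (modelsF_embEH_iff hr).mpr fun B hpos hneg => ?_
  obtain ⟨a, ha, hsat⟩ := (modelsF_embEB_iff hr).mp h B hpos hneg
  have ha_mem : a ∈ r.atoms := List.mem_append_left _ (List.mem_append_left _ ha)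
  have hnamed (x) (hx : a.hasVar x) : IsNamed w (B x) := by
    obtain ⟨b, hb, hbx⟩ := hsafe x ⟨a, ha_mem, hx⟩
    exact isNamed_of_sat_box (hpos b hb).2 hbx
  exact ⟨a, ha, hsat, sat_box_of_modelsT_PIAax hPIA hfuncs ⟨r, hrP, a, ha_mem, rfl⟩ hnamed hsat⟩

end Embeddings

theorem stmt10_general {S : Sig} (X : Sem) (P : Program S)
    (hwf : progWf P) (hfuncs : ∀ f, f ∈ progFuncs P)
    (w : Interp S) (T : Set (Formula S)) :
    (ModelsT X w T (tauHPv P) → ModelsT X w T (tauEBv P)) ∧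
    (progSafe P → ModelsT X w T (tauEBv P) → ModelsT X w T (tauEHv P)) := by
  simp only [tauHPv, tauEBv, tauEHv, modelsT_union_iff, modelsT_ruleEmb_iff]
  constructor
  · rintro ⟨⟨hHP, hPIA⟩, hUNA⟩
    exact ⟨⟨fun r hr => modelsF_embEB_of_modelsF_embHP (hwf r hr).1 (hHP r hr), hPIA⟩, hUNA⟩
  · rintro hsafe ⟨⟨hEB, hPIA⟩, hUNA⟩
    exact ⟨fun r hr => modelsF_embEH_of_modelsF_embEB hPIA hfuncs hr (hwf r hr).1 (hsafe r hr)
      (hEB r hr), hUNA⟩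

/-- For every disjunctive program `P` and autoepistemic
interpretation `⟨w,T⟩`: if `w ⊨ˣ_T τ^∨_HP(P)` then `w ⊨ˣ_T τ^∨_EB(P)`;
and if `P` is safe then `w ⊨ˣ_T τ^∨_EB(P)` implies `w ⊨ˣ_T τ^∨_EH(P)`. -/
theorem stmt10 {S : Sig} (X : Sem) (P : Program S)
    (hwf : progWf P) (hfull : fullSig P) (hgood : goodSig P)
    (w : Interp S) (T : Set (Formula S)) :
    (ModelsT X w T (tauHPv P) → ModelsT X w T (tauEBv P)) ∧
    (progSafe P → ModelsT X w T (tauEBv P) → ModelsT X w T (tauEHv P)) :=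
  stmt10_general X P hwf hfull.1 w T
end
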